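/- arXiv:2401.06451 — 3 statements merged into one kernel-verified Lean document; each statement's English description precedes it below -/
import Mathlib

section
/- If M is a Kripke model in the class KH and U = (E,ϑ,K^U) is a hope update model, then the product update M × U is again in the class KH; that is, each K_i^× is an equivalence relation and each H_i^× is shift-serial, contained in K_i^× (HinK), and satisfies oneH. -/
/-- A Kripke model (raw data): valuation, and knowledge and hope relations for `n` agents. -/
structure Model (n : ℕ) (W : Type) where
  val : ℕ → W → Prop
  K : Fin n → W → W → Prop
  H : Fin n → W → W → Prop

/-- Membership in the class KH: each `K i` is an equivalence relation, each `H i` is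
shift-serial, `H i ⊆ K i` (HinK), and oneH. -/
def Model.KH {n : ℕ} {W : Type} (M : Model n W) : Prop :=
  (∀ i, Equivalence (M.K i)) ∧
  (∀ i w v, M.H i w v → ∃ z, M.H i v z) ∧
  (∀ i w v, M.H i w v → M.K i w v) ∧
  (∀ i w v, (∃ x, M.H i w x) → (∃ x, M.H i v x) → M.K i w v → M.H i w v)

/-- Formulas of the language `L_KH^priv`: atoms, negation, conjunction, knowledge,
hope, and private hope updates `[U,e]φ`, where the pointed hope update model `(U,e)`
consists of a finite nonempty set of actions `Fin m`, a hope update function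
`ϑ : Fin m → Fin n → Form`, equivalence relations `K^U_i` on actions,
and a designated action `e : Fin m`. -/
inductive Form (n : ℕ) : Type where
  | atom : ℕ → Form n
  | neg : Form n → Form n
  | and : Form n → Form n → Form n
  | know : Fin n → Form n → Form n
  | hope : Fin n → Form n → Form n
  | upd : (m : ℕ) → (ϑ : Fin m → Fin n → Form n) →
      (KU : Fin n → Fin m → Fin m → Prop) → (∀ i, Equivalence (KU i)) →
      Fin m → Form n → Form n

/-- A hope update model, packaged: actions `Fin m`, hope update formulas `ϑ e i`,
and equivalence relations `KU i` on actions. -/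
structure UpdModel (n m : ℕ) where
  ϑ : Fin m → Fin n → Form n
  KU : Fin n → Fin m → Fin m → Prop
  equiv : ∀ i, Equivalence (KU i)

/-- The formula `[U,e]φ`. -/
def Form.updM {n m : ℕ} (U : UpdModel n m) (e : Fin m) (φ : Form n) : Form n :=
  .upd m U.ϑ U.KU U.equiv e φ

/-- The product update `M × U` (with the hope update formulas given semantically as
predicates `ϑc e i : W → Prop`). -/
def Model.prodRaw {n : ℕ} {W : Type} {m : ℕ} (M : Model n W)
    (ϑc : Fin m → Fin n → W → Prop) (KU : Fin n → Fin m → Fin m → Prop) :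
    Model n (W × Fin m) where
  val := fun p x => M.val p x.1
  K := fun i x y => M.K i x.1 y.1 ∧ KU i x.2 y.2
  H := fun i x y => (M.K i x.1 y.1 ∧ KU i x.2 y.2) ∧ ϑc x.2 i x.1 ∧ ϑc y.2 i y.1

/-- Truth at a world. -/
def sat {n : ℕ} : Form n → {W : Type} → Model n W → W → Prop
  | .atom p, _, M, w => M.val p w
  | .neg φ, _, M, w => ¬ sat φ M w
  | .and φ ψ, _, M, w => sat φ M w ∧ sat ψ M w
  | .know i φ, _, M, w => ∀ v, M.K i w v → sat φ M v
  | .hope i φ, _, M, w => ∀ v, M.H i w v → sat φ M v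
  | .upd _ ϑ KU _ e ψ, _, M, w =>
      sat ψ (M.prodRaw (fun f i v => sat (ϑ f i) M v) KU) (w, e)

/-- The product update `M × U`. -/
def Model.prodU {n : ℕ} {W : Type} {m : ℕ} (M : Model n W) (U : UpdModel n m) :
    Model n (W × Fin m) :=
  M.prodRaw (fun f i v => sat (U.ϑ f i) M v) U.KU

def ftop {n : ℕ} : Form n := .neg (.and (.atom 0) (.neg (.atom 0)))
def fbot {n : ℕ} : Form n := .neg ftop
def fimpl {n : ℕ} (φ ψ : Form n) : Form n := .neg (.and φ (.neg ψ))
def forr {n : ℕ} (φ ψ : Form n) : Form n := .neg (.and (.neg φ) (.neg ψ))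
def fiff {n : ℕ} (φ ψ : Form n) : Form n := .and (fimpl φ ψ) (fimpl ψ φ)
def fcorrect {n : ℕ} (i : Fin n) : Form n := .neg (.hope i fbot)

/-- Validity on the class KH. -/
def Valid {n : ℕ} (φ : Form n) : Prop :=
  ∀ (W : Type) (M : Model n W), Nonempty W → M.KH → ∀ w : W, sat φ M w


/-! In a model in KH, `H i` is the restriction of `K i` to the worlds where agent `i` is correct,
that is, those from which some world is `H i`-accessible. Conversely, restricting each `K i` to an
arbitrary set of worlds yields hope relations of a model in KH. The product update is such a
restriction: `(w, e)` is correct for `i` exactly when `ϑ_i(e)` holds at `w`. -/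

namespace Model

variable {n m : ℕ} {W : Type} {M : Model n W}

theorem KH_of_H_iff (hK : ∀ i, Equivalence (M.K i)) (correct : Fin n → W → Prop)
    (hH : ∀ i w v, M.H i w v ↔ M.K i w v ∧ correct i w ∧ correct i v) : M.KH := by
  have shiftSerial (i w v) (hwv : M.H i w v) : ∃ z, M.H i v z :=
    have hv : correct i v := ((hH i w v).mp hwv).2.2
    ⟨v, (hH i v v).mpr ⟨(hK i).refl v, hv, hv⟩⟩
  have hInK (i w v) (hwv : M.H i w v) : M.K i w v := ((hH i w v).mp hwv).1
  have oneH (i w v) : (∃ x, M.H i w x) → (∃ x, M.H i v x) → M.K i w v → M.H i w v := by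
    rintro ⟨x, hwx⟩ ⟨y, hvy⟩ hwv
    have hw : correct i w := ((hH i w x).mp hwx).2.1
    have hv : correct i v := ((hH i v y).mp hvy).2.1
    exact (hH i w v).mpr ⟨hwv, hw, hv⟩
  exact ⟨hK, shiftSerial, hInK, oneH⟩

theorem equivalence_prodRaw_K (hK : ∀ i, Equivalence (M.K i))
    (ϑc : Fin m → Fin n → W → Prop) {KU : Fin n → Fin m → Fin m → Prop}
    (hKU : ∀ i, Equivalence (KU i)) (i : Fin n) : Equivalence ((M.prodRaw ϑc KU).K i) :=
  (Setoid.prod ⟨M.K i, hK i⟩ ⟨KU i, hKU i⟩).iseqv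

end Model

theorem prodU_KH_general {n m : ℕ} {W : Type} {M : Model n W} (hK : ∀ i, Equivalence (M.K i))
    (ϑc : Fin m → Fin n → W → Prop) {KU : Fin n → Fin m → Fin m → Prop}
    (hKU : ∀ i, Equivalence (KU i)) : (M.prodRaw ϑc KU).KH :=
  Model.KH_of_H_iff (Model.equivalence_prodRaw_K hK ϑc hKU) (fun i x => ϑc x.2 i x.1)
    fun _ _ _ => Iff.rfl

/-- if `M ∈ KH` and `U` is a hope update model, then the product update
`M × U` is again in KH: each `K_i^×` is an equivalence relation and each `H_i^×` is
shift-serial, contained in `K_i^×`, and satisfies oneH. -/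
theorem prodU_KH {n : ℕ} (hn : 0 < n) {W : Type} [Nonempty W] {m : ℕ}
    (M : Model n W) (hM : M.KH) (U : UpdModel n m) :
    (M.prodU U).KH := by
  exact prodU_KH_general hM.1 (fun e i w => sat (U.ϑ e i) M w) U.equiv
end

section
/- Private hope updates compose: for every model M in KH and hope update models U = (E,ϑ,K^U) and U' = (E',ϑ',K^{U'}), the map ((w,e),e') ↦ (w,(e,e')) is an isomorphism between the models (M × U) × U' and M × (U ; U'); consequently, for all e ∈ E, e' ∈ E', w ∈ W and φ ∈ L_KH^priv, M,w ⊨ [U,e][U',e']φ if and only if M,w ⊨ [(U;U'),(e,e')]φ. -/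
/-- Composition `U ; U'` of hope update models: actions `E × E'` (coded as
`Fin (m * m')` via `finProdFinEquiv`), hope update formulas
`ϑ''_i((e,e')) = [U,e]ϑ'_i(e')`, and the product of the action relations. -/
def UpdModel.comp {n m m' : ℕ} (U : UpdModel n m) (U' : UpdModel n m') :
    UpdModel n (m * m') where
  ϑ := fun x i =>
    Form.updM U (finProdFinEquiv.symm x).1 (U'.ϑ (finProdFinEquiv.symm x).2 i)
  KU := fun i x y =>
    U.KU i (finProdFinEquiv.symm x).1 (finProdFinEquiv.symm y).1 ∧
    U'.KU i (finProdFinEquiv.symm x).2 (finProdFinEquiv.symm y).2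
  equiv := fun i =>
    ⟨fun _ => ⟨(U.equiv i).refl _, (U'.equiv i).refl _⟩,
     fun h => ⟨(U.equiv i).symm h.1, (U'.equiv i).symm h.2⟩,
     fun h h' => ⟨(U.equiv i).trans h.1 h'.1, (U'.equiv i).trans h.2 h'.2⟩⟩

/-!
Private updates are bisimulation invariant: the hope relation of a product update depends only on
the knowledge relations and on the truth values of the hope update formulas, so a bisimulation
between two models lifts to one between their product updates. The equivalence of the two formulas
is this invariance applied to the isomorphism `((w, e), e') ↦ (w, (e, e'))`. That map respects hope
because the formula `[U, e]ϑ'ᵢ(e')` of `U ; U'` holds at `w` exactly when `ϑ'ᵢ(e')` holds at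
`(w, e)` in `M × U`.
-/

section Zigzag

variable {W V E : Type*} {Z : W → V → Prop} {R : W → W → Prop} {S : V → V → Prop}

/-- The forth and back conditions of a bisimulation `Z`, for one pair of accessibility
relations. -/
structure IsZigzag (Z : W → V → Prop) (R : W → W → Prop) (S : V → V → Prop) : Prop where
  forth {w v w'} : Z w v → R w w' → ∃ v', S v v' ∧ Z w' v'
  back {w v v'} : Z w v → S v v' → ∃ w', R w w' ∧ Z w' v'

namespace IsZigzag

theorem of_surjective {f : W → V} (hf : Function.Surjective f)
    (h : ∀ w w', R w w' ↔ S (f w) (f w')) : IsZigzag (fun w v => f w = v) R S where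
  forth := by
    rintro w _ w' rfl hR
    exact ⟨f w', (h w w').1 hR, rfl⟩
  back := by
    rintro w _ v' rfl hS
    obtain ⟨w', rfl⟩ := hf v'
    exact ⟨w', (h w w').2 hS, rfl⟩

theorem forall_iff (h : IsZigzag Z R S) {P : W → Prop} {Q : V → Prop}
    (hPQ : ∀ ⦃w v⦄, Z w v → (P w ↔ Q v)) {w : W} {v : V} (hZ : Z w v) :
    (∀ w', R w w' → P w') ↔ ∀ v', S v v' → Q v' := by
  constructor
  · intro hP v' hS
    obtain ⟨w', hR, hZ'⟩ := h.back hZ hS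
    exact (hPQ hZ').1 (hP w' hR)
  · intro hQ w' hR
    obtain ⟨v', hS, hZ'⟩ := h.forth hZ hR
    exact (hPQ hZ').2 (hQ v' hS)

theorem prod (h : IsZigzag Z R S) (T : E → E → Prop) :
    IsZigzag (fun (x : W × E) (y : V × E) => Z x.1 y.1 ∧ x.2 = y.2)
      (fun x x' => R x.1 x'.1 ∧ T x.2 x'.2) (fun y y' => S y.1 y'.1 ∧ T y.2 y'.2) where
  forth := by
    rintro ⟨w, e⟩ ⟨v, _⟩ ⟨w', f⟩ ⟨hZ, rfl⟩ ⟨hR, hT⟩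
    obtain ⟨v', hS, hZ'⟩ := h.forth hZ hR
    exact ⟨(v', f), ⟨hS, hT⟩, hZ', rfl⟩
  back := by
    rintro ⟨w, e⟩ ⟨v, _⟩ ⟨v', f⟩ ⟨hZ, rfl⟩ ⟨hS, hT⟩
    obtain ⟨w', hR, hZ'⟩ := h.back hZ hS
    exact ⟨(w', f), ⟨hR, hT⟩, hZ', rfl⟩

theorem restrict (h : IsZigzag Z R S) {P : W → Prop} {Q : V → Prop}
    (hPQ : ∀ ⦃w v⦄, Z w v → (P w ↔ Q v)) :
    IsZigzag Z (fun w w' => R w w' ∧ P w ∧ P w') (fun v v' => S v v' ∧ Q v ∧ Q v') where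
  forth := by
    rintro w v w' hZ ⟨hR, hP, hP'⟩
    obtain ⟨v', hS, hZ'⟩ := h.forth hZ hR
    exact ⟨v', ⟨hS, (hPQ hZ).1 hP, (hPQ hZ').1 hP'⟩, hZ'⟩
  back := by
    rintro w v v' hZ ⟨hS, hQ, hQ'⟩
    obtain ⟨w', hR, hZ'⟩ := h.back hZ hS
    exact ⟨w', ⟨hR, (hPQ hZ).2 hQ, (hPQ hZ').2 hQ'⟩, hZ'⟩

end IsZigzag

end Zigzag

namespace Model

variable {n : ℕ} {W V : Type}

/-- `Z` is a bisimulation between `M` and `N`, with respect to both knowledge and hope. It need not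
be total on either side. -/
structure IsBisimulation (M : Model n W) (N : Model n V) (Z : W → V → Prop) : Prop where
  val_iff {w v} : Z w v → ∀ p, M.val p w ↔ N.val p v
  know (i) : IsZigzag Z (M.K i) (N.K i)
  hope (i) : IsZigzag Z (M.H i) (N.H i)

namespace IsBisimulation

variable {M : Model n W} {N : Model n V} {Z : W → V → Prop}

theorem prodRaw (h : IsBisimulation M N Z) {m : ℕ} {ϑM : Fin m → Fin n → W → Prop}
    {ϑN : Fin m → Fin n → V → Prop}
    (hϑ : ∀ e i ⦃w v⦄, Z w v → (ϑM e i w ↔ ϑN e i v)) (KU : Fin n → Fin m → Fin m → Prop) :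
    IsBisimulation (M.prodRaw ϑM KU) (N.prodRaw ϑN KU)
      (fun x y => Z x.1 y.1 ∧ x.2 = y.2) where
  val_iff hZ := h.val_iff hZ.1
  know i := (h.know i).prod (KU i)
  hope i := by
    refine ((h.know i).prod (KU i)).restrict
      (P := fun x => ϑM x.2 i x.1) (Q := fun y => ϑN y.2 i y.1) ?_
    rintro ⟨w, e⟩ ⟨v, _⟩ ⟨hZ, rfl⟩
    exact hϑ e i hZ

theorem sat_iff (h : IsBisimulation M N Z) (φ : Form n) {w : W} {v : V} (hZ : Z w v) :
    sat φ M w ↔ sat φ N v := by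
  induction φ generalizing W V with
  | atom p => exact h.val_iff hZ p
  | neg _ ih => exact not_congr (ih h hZ)
  | and _ _ ihφ ihψ => exact and_congr (ihφ h hZ) (ihψ h hZ)
  | know i _ ih => exact (h.know i).forall_iff (fun _ _ => ih h) hZ
  | hope i _ ih => exact (h.hope i).forall_iff (fun _ _ => ih h) hZ
  | upd _ _ KU _ _ _ ihϑ ihψ =>
    exact ihψ (h.prodRaw (fun f i _ _ => ihϑ f i h) KU) ⟨hZ, rfl⟩

end IsBisimulation

/-- An isomorphism of Kripke models: a bijection of worlds preserving and reflecting the valuation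
and both families of relations. -/
structure Iso (M : Model n W) (N : Model n V) extends W ≃ V where
  val_iff (p : ℕ) (w : W) : M.val p w ↔ N.val p (toFun w)
  know_iff (i : Fin n) (w w' : W) : M.K i w w' ↔ N.K i (toFun w) (toFun w')
  hope_iff (i : Fin n) (w w' : W) : M.H i w w' ↔ N.H i (toFun w) (toFun w')

theorem Iso.isBisimulation {M : Model n W} {N : Model n V} (f : Iso M N) :
    IsBisimulation M N (fun w v => f.toEquiv w = v) where
  val_iff := by
    rintro w _ rfl p
    exact f.val_iff p w
  know i := .of_surjective f.surjective (f.know_iff i)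
  hope i := .of_surjective f.surjective (f.hope_iff i)

end Model

section Composition

variable {n m m' : ℕ} {W : Type}

theorem UpdModel.comp_KU_iff (U : UpdModel n m) (U' : UpdModel n m') (i : Fin n)
    (x y : Fin m × Fin m') :
    (U.comp U').KU i (finProdFinEquiv x) (finProdFinEquiv y) ↔
      U.KU i x.1 y.1 ∧ U'.KU i x.2 y.2 := by
  simp only [comp, Equiv.symm_apply_apply]

theorem UpdModel.sat_comp_ϑ_iff (U : UpdModel n m) (U' : UpdModel n m') (i : Fin n)
    (x : Fin m × Fin m') (M : Model n W) (w : W) :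
    sat ((U.comp U').ϑ (finProdFinEquiv x) i) M w ↔ sat (U'.ϑ x.2 i) (M.prodU U) (w, x.1) := by
  simp only [comp, Equiv.symm_apply_apply, Form.updM, sat, Model.prodU]

theorem Model.prodU_prodU_K_iff (M : Model n W) (U : UpdModel n m) (U' : UpdModel n m')
    (i : Fin n) (x y : (W × Fin m) × Fin m') :
    ((M.prodU U).prodU U').K i x y ↔
      (M.prodU (U.comp U')).K i (x.1.1, finProdFinEquiv (x.1.2, x.2))
        (y.1.1, finProdFinEquiv (y.1.2, y.2)) :=
  and_assoc.trans (and_congr_right' (U.comp_KU_iff U' i (x.1.2, x.2) (y.1.2, y.2)).symm)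

/-- The isomorphism `((w, e), e') ↦ (w, (e, e'))` from `(M × U) × U'` to `M × (U ; U')`. -/
def Model.prodUCompIso (M : Model n W) (U : UpdModel n m) (U' : UpdModel n m') :
    Iso ((M.prodU U).prodU U') (M.prodU (U.comp U')) where
  toEquiv := (Equiv.prodAssoc W (Fin m) (Fin m')).trans
    ((Equiv.refl W).prodCongr finProdFinEquiv)
  val_iff _ _ := Iff.rfl
  know_iff := M.prodU_prodU_K_iff U U'
  hope_iff i x y := and_congr (M.prodU_prodU_K_iff U U' i x y) <| and_congr
    (U.sat_comp_ϑ_iff U' i (x.1.2, x.2) M x.1.1).symm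
    (U.sat_comp_ϑ_iff U' i (y.1.2, y.2) M y.1.1).symm

end Composition

theorem priv_comp_general {n : ℕ} {W : Type} {m m' : ℕ}
    (M : Model n W) (U : UpdModel n m) (U' : UpdModel n m') :
    (Function.Bijective
        (fun x : (W × Fin m) × Fin m' => (x.1.1, finProdFinEquiv (x.1.2, x.2))) ∧
      (∀ (p : ℕ) (x : (W × Fin m) × Fin m'),
        ((M.prodU U).prodU U').val p x ↔
          (M.prodU (U.comp U')).val p (x.1.1, finProdFinEquiv (x.1.2, x.2))) ∧
      (∀ (i : Fin n) (x y : (W × Fin m) × Fin m'),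
        ((M.prodU U).prodU U').K i x y ↔
          (M.prodU (U.comp U')).K i (x.1.1, finProdFinEquiv (x.1.2, x.2))
            (y.1.1, finProdFinEquiv (y.1.2, y.2))) ∧
      (∀ (i : Fin n) (x y : (W × Fin m) × Fin m'),
        ((M.prodU U).prodU U').H i x y ↔
          (M.prodU (U.comp U')).H i (x.1.1, finProdFinEquiv (x.1.2, x.2))
            (y.1.1, finProdFinEquiv (y.1.2, y.2)))) ∧
    ∀ (e : Fin m) (e' : Fin m') (w : W) (φ : Form n),
      sat (Form.updM U e (Form.updM U' e' φ)) M w ↔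
        sat (Form.updM (U.comp U') (finProdFinEquiv (e, e')) φ) M w := by
  let f := M.prodUCompIso U U'
  exact ⟨⟨f.bijective, f.val_iff, f.know_iff, f.hope_iff⟩,
    fun _ _ _ φ => f.isBisimulation.sat_iff φ rfl⟩

/-- private hope updates compose: the map `((w,e),e') ↦ (w,(e,e'))` is an
isomorphism between `(M × U) × U'` and `M × (U ; U')` (a bijection preserving the
valuation and the knowledge and hope relations); consequently
`M,w ⊨ [U,e][U',e']φ` iff `M,w ⊨ [(U;U'),(e,e')]φ`. -/
theorem priv_comp {n : ℕ} (hn : 0 < n) {W : Type} [Nonempty W] {m m' : ℕ}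
    (M : Model n W) (hM : M.KH) (U : UpdModel n m) (U' : UpdModel n m') :
    (Function.Bijective
        (fun x : (W × Fin m) × Fin m' => (x.1.1, finProdFinEquiv (x.1.2, x.2))) ∧
      (∀ (p : ℕ) (x : (W × Fin m) × Fin m'),
        ((M.prodU U).prodU U').val p x ↔
          (M.prodU (U.comp U')).val p (x.1.1, finProdFinEquiv (x.1.2, x.2))) ∧
      (∀ (i : Fin n) (x y : (W × Fin m) × Fin m'),
        ((M.prodU U).prodU U').K i x y ↔
          (M.prodU (U.comp U')).K i (x.1.1, finProdFinEquiv (x.1.2, x.2))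
            (y.1.1, finProdFinEquiv (y.1.2, y.2))) ∧
      (∀ (i : Fin n) (x y : (W × Fin m) × Fin m'),
        ((M.prodU U).prodU U').H i x y ↔
          (M.prodU (U.comp U')).H i (x.1.1, finProdFinEquiv (x.1.2, x.2))
            (y.1.1, finProdFinEquiv (y.1.2, y.2)))) ∧
    ∀ (e : Fin m) (e' : Fin m') (w : W) (φ : Form n),
      sat (Form.updM U e (Form.updM U' e' φ)) M w ↔
        sat (Form.updM (U.comp U') (finProdFinEquiv (e, e')) φ) M w :=
  priv_comp_general M U U'
end

section
/- Equiexpressivity of L_KH^priv with L_KH: there is a translation t : L_KH^priv → L_KH (defined by recursion along a complexity measure, pushing private update modalities inward via the reduction axioms of KH^priv) such that for every formula φ ∈ L_KH^priv, t(φ) contains no update modality and the equivalence φ ↔ t(φ) is derivable in the axiom system KH^priv. -/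
/-- Conjunction of a list of formulas. -/
def bigAnd {n : ℕ} : List (Form n) → Form n
  | [] => ftop
  | φ :: l => .and φ (bigAnd l)

/-- The conjunction `⋀_{f : e K^U_i f} g f` over all actions `f` related to `e`. -/
noncomputable def actConj {n m : ℕ} (KU : Fin n → Fin m → Fin m → Prop)
    (i : Fin n) (e : Fin m) (g : Fin m → Form n) : Form n :=
  bigAnd (((List.finRange m).filter
    (fun f => @decide (KU i e f) (Classical.dec _))).map g)

/-- `φ` is a propositional tautology: true under every assignment of truth values to
formulas respecting negation and conjunction. -/
def Tautology {n : ℕ} (φ : Form n) : Prop :=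
  ∀ v : Form n → Prop,
    (∀ ψ, v (.neg ψ) ↔ ¬ v ψ) → (∀ ψ χ, v (.and ψ χ) ↔ (v ψ ∧ v χ)) → v φ

/-- The axiom system `KH^priv`: the base system `KH` extended with the reduction
axioms for private hope updates. -/
inductive DerivPriv {n : ℕ} : Form n → Prop where
  | taut {φ} : Tautology φ → DerivPriv φ
  | hdag (i : Fin n) : DerivPriv (.hope i (.neg (.hope i fbot)))
  | kK (i : Fin n) (φ ψ : Form n) :
      DerivPriv (fimpl (.and (.know i (fimpl φ ψ)) (.know i φ)) (.know i ψ))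
  | fourK (i : Fin n) (φ : Form n) : DerivPriv (fimpl (.know i φ) (.know i (.know i φ)))
  | fiveK (i : Fin n) (φ : Form n) :
      DerivPriv (fimpl (.neg (.know i φ)) (.know i (.neg (.know i φ))))
  | tK (i : Fin n) (φ : Form n) : DerivPriv (fimpl (.know i φ) φ)
  | kh (i : Fin n) (φ : Form n) :
      DerivPriv (fiff (.hope i φ) (fimpl (fcorrect i) (.know i (fimpl (fcorrect i) φ))))
  | mp {φ ψ : Form n} : DerivPriv (fimpl φ ψ) → DerivPriv φ → DerivPriv ψ
  | necK {φ : Form n} (i : Fin n) : DerivPriv φ → DerivPriv (.know i φ)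
  | redAtom {m : ℕ} (U : UpdModel n m) (e : Fin m) (p : ℕ) :
      DerivPriv (fiff (Form.updM U e (.atom p)) (.atom p))
  | redNeg {m : ℕ} (U : UpdModel n m) (e : Fin m) (φ : Form n) :
      DerivPriv (fiff (Form.updM U e (.neg φ)) (.neg (Form.updM U e φ)))
  | redAnd {m : ℕ} (U : UpdModel n m) (e : Fin m) (φ ψ : Form n) :
      DerivPriv (fiff (Form.updM U e (.and φ ψ))
        (.and (Form.updM U e φ) (Form.updM U e ψ)))
  | redKnow {m : ℕ} (U : UpdModel n m) (e : Fin m) (i : Fin n) (φ : Form n) :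
      DerivPriv (fiff (Form.updM U e (.know i φ))
        (actConj U.KU i e (fun f => .know i (Form.updM U f φ))))
  | redHope {m : ℕ} (U : UpdModel n m) (e : Fin m) (i : Fin n) (φ : Form n) :
      DerivPriv (fiff (Form.updM U e (.hope i φ))
        (fimpl (U.ϑ e i)
          (actConj U.KU i e
            (fun f => .know i (fimpl (U.ϑ f i) (Form.updM U f φ))))))
  | redComp {m m' : ℕ} (U : UpdModel n m) (U' : UpdModel n m') (e : Fin m)
      (e' : Fin m') (φ : Form n) :
      DerivPriv (fiff (Form.updM U e (Form.updM U' e' φ))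
        (Form.updM (U.comp U') (finProdFinEquiv (e, e')) φ))

/-- The base axiom system `KH` (propositional tautologies, `H†`, `K^K`, `4^K`, `5^K`,
`T^K`, the `KH` axiom, modus ponens, and necessitation for `K_i`). -/
inductive DerivKH {n : ℕ} : Form n → Prop where
  | taut {φ} : Tautology φ → DerivKH φ
  | hdag (i : Fin n) : DerivKH (.hope i (.neg (.hope i fbot)))
  | kK (i : Fin n) (φ ψ : Form n) :
      DerivKH (fimpl (.and (.know i (fimpl φ ψ)) (.know i φ)) (.know i ψ))
  | fourK (i : Fin n) (φ : Form n) : DerivKH (fimpl (.know i φ) (.know i (.know i φ)))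
  | fiveK (i : Fin n) (φ : Form n) :
      DerivKH (fimpl (.neg (.know i φ)) (.know i (.neg (.know i φ))))
  | tK (i : Fin n) (φ : Form n) : DerivKH (fimpl (.know i φ) φ)
  | kh (i : Fin n) (φ : Form n) :
      DerivKH (fiff (.hope i φ) (fimpl (fcorrect i) (.know i (fimpl (fcorrect i) φ))))
  | mp {φ ψ : Form n} : DerivKH (fimpl φ ψ) → DerivKH φ → DerivKH ψ
  | necK {φ : Form n} (i : Fin n) : DerivKH φ → DerivKH (.know i φ)

/-- Update-free formulas: the sublanguage `L_KH` of `L_KH^priv`. -/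
inductive UpdFree {n : ℕ} : Form n → Prop where
  | atom (p : ℕ) : UpdFree (.atom p)
  | neg {φ} : UpdFree φ → UpdFree (.neg φ)
  | and {φ ψ} : UpdFree φ → UpdFree ψ → UpdFree (.and φ ψ)
  | know {φ} (i : Fin n) : UpdFree φ → UpdFree (.know i φ)
  | hope {φ} (i : Fin n) : UpdFree φ → UpdFree (.hope i φ)

/-!
Each reduction axiom rewrites `[U,e]φ` in terms of updates of immediate subformulas of `φ` and of
the hope update formulas of `U`. In the composition case `[U,e][U',e']φ ↔ [U;U',(e,e')]φ`, the hope
update formulas of `U;U'` are the formulas `[U,e]ϑ'`, with `ϑ'` again an immediate subformula of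
`[U',e']φ`. Hence, once the hope update formulas of `U` have been replaced by update-free
equivalents, `[U,e]` can be pushed inward by structural recursion on `φ`, for all `(U,e)`
simultaneously; structural recursion takes the place of recursion along the complexity measure.
-/

section Translation

variable {n m : ℕ} {φ ψ χ φ' ψ' : Form n}

/-- Truth assignments to formulas, as quantified over in `Tautology`: formulas whose main connective
is neither negation nor conjunction, updates included, are treated as propositional variables. -/
structure IsBoolean (v : Form n → Prop) : Prop where
  neg : ∀ φ, v (.neg φ) ↔ ¬ v φ
  and : ∀ φ ψ, v (.and φ ψ) ↔ (v φ ∧ v ψ)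

namespace IsBoolean

variable {v : Form n → Prop}

theorem fimpl_iff (hv : IsBoolean v) : v (fimpl φ ψ) ↔ (v φ → v ψ) := by
  rw [fimpl, hv.neg, hv.and, hv.neg, not_and_not_right]

theorem fiff_iff (hv : IsBoolean v) : v (fiff φ ψ) ↔ (v φ ↔ v ψ) := by
  rw [fiff, hv.and, hv.fimpl_iff, hv.fimpl_iff]
  exact iff_def.symm

end IsBoolean

namespace DerivPriv

theorem of_entails (h : ∀ v, IsBoolean v → v φ → v ψ) (hφ : DerivPriv φ) : DerivPriv ψ :=
  .mp (.taut fun v hneg hand =>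
    have hv : IsBoolean v := ⟨hneg, hand⟩
    hv.fimpl_iff.mpr (h v hv)) hφ

theorem of_entails₂ (h : ∀ v, IsBoolean v → v φ → v ψ → v χ) (hφ : DerivPriv φ)
    (hψ : DerivPriv ψ) : DerivPriv χ :=
  .mp (of_entails (fun v hv hvφ => hv.fimpl_iff.mpr (h v hv hvφ)) hφ) hψ

theorem know_mono (i : Fin n) (h : DerivPriv (fimpl φ ψ)) :
    DerivPriv (fimpl (.know i φ) (.know i ψ)) := by
  refine of_entails₂ (fun v hv hK hnec => ?_) (kK i φ ψ) (necK i h)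
  rw [hv.fimpl_iff, hv.and] at hK
  exact hv.fimpl_iff.mpr fun hφ => hK ⟨hnec, hφ⟩

end DerivPriv

/-- Provable equivalence of formulas in the axiom system `KH^priv`. -/
def ProvEquiv (φ ψ : Form n) : Prop := DerivPriv (fiff φ ψ)

namespace ProvEquiv

theorem refl (φ : Form n) : ProvEquiv φ φ :=
  DerivPriv.taut fun _ hneg hand => (IsBoolean.mk hneg hand).fiff_iff.mpr Iff.rfl

theorem symm (h : ProvEquiv φ ψ) : ProvEquiv ψ φ :=
  h.of_entails fun _ hv hvh => hv.fiff_iff.mpr (hv.fiff_iff.mp hvh).symm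

theorem trans (h : ProvEquiv φ ψ) (h' : ProvEquiv ψ χ) : ProvEquiv φ χ :=
  h.of_entails₂ (fun _ hv hvh hvh' =>
    hv.fiff_iff.mpr ((hv.fiff_iff.mp hvh).trans (hv.fiff_iff.mp hvh'))) h'

instance : Trans (ProvEquiv (n := n)) ProvEquiv ProvEquiv where
  trans := trans

theorem derivPriv_fimpl (h : ProvEquiv φ ψ) : DerivPriv (fimpl φ ψ) :=
  h.of_entails fun _ hv hvh => hv.fimpl_iff.mpr (hv.fiff_iff.mp hvh).mp

theorem neg (h : ProvEquiv φ φ') : ProvEquiv (.neg φ) (.neg φ') :=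
  h.of_entails fun _ hv hvh => by
    rw [hv.fiff_iff, hv.neg, hv.neg]
    exact not_congr (hv.fiff_iff.mp hvh)

theorem and (hφ : ProvEquiv φ φ') (hψ : ProvEquiv ψ ψ') :
    ProvEquiv (.and φ ψ) (.and φ' ψ') :=
  hφ.of_entails₂ (fun _ hv hvφ hvψ => by
    rw [hv.fiff_iff, hv.and, hv.and]
    exact and_congr (hv.fiff_iff.mp hvφ) (hv.fiff_iff.mp hvψ)) hψ

theorem impl (hφ : ProvEquiv φ φ') (hψ : ProvEquiv ψ ψ') :
    ProvEquiv (fimpl φ ψ) (fimpl φ' ψ') :=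
  (hφ.and hψ.neg).neg

theorem know (i : Fin n) (h : ProvEquiv φ ψ) : ProvEquiv (.know i φ) (.know i ψ) :=
  DerivPriv.of_entails₂ (fun _ hv hvφψ hvψφ =>
    hv.fiff_iff.mpr ⟨hv.fimpl_iff.mp hvφψ, hv.fimpl_iff.mp hvψφ⟩)
    (h.derivPriv_fimpl.know_mono i) (h.symm.derivPriv_fimpl.know_mono i)

theorem hope (i : Fin n) (h : ProvEquiv φ ψ) : ProvEquiv (.hope i φ) (.hope i ψ) :=
  calc
    ProvEquiv (.hope i φ) (fimpl (fcorrect i) (.know i (fimpl (fcorrect i) φ))) :=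
      DerivPriv.kh i φ
    ProvEquiv _ (fimpl (fcorrect i) (.know i (fimpl (fcorrect i) ψ))) :=
      (refl _).impl (((refl _).impl h).know i)
    ProvEquiv _ (.hope i ψ) := symm (DerivPriv.kh i ψ)

theorem bigAnd_map {ι : Type*} {g g' : ι → Form n} (h : ∀ x, ProvEquiv (g x) (g' x))
    (l : List ι) : ProvEquiv (bigAnd (l.map g)) (bigAnd (l.map g')) := by
  induction l with
  | nil => exact refl ftop
  | cons x l ih => exact (h x).and ih

theorem actConj (KU : Fin n → Fin m → Fin m → Prop) (i : Fin n) (e : Fin m)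
    {g g' : Fin m → Form n} (h : ∀ f, ProvEquiv (g f) (g' f)) :
    ProvEquiv (actConj KU i e g) (actConj KU i e g') :=
  bigAnd_map h _

end ProvEquiv

namespace UpdFree

theorem impl (hφ : UpdFree φ) (hψ : UpdFree ψ) : UpdFree (fimpl φ ψ) :=
  (hφ.and hψ.neg).neg

theorem bigAnd {l : List (Form n)} (h : ∀ φ ∈ l, UpdFree φ) : UpdFree (bigAnd l) := by
  induction l with
  | nil => exact ((atom 0).and (atom 0).neg).neg
  | cons φ l ih =>
    rw [List.forall_mem_cons] at h
    exact h.1.and (ih h.2)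

theorem actConj (KU : Fin n → Fin m → Fin m → Prop) (i : Fin n) (e : Fin m)
    {g : Fin m → Form n} (h : ∀ f, UpdFree (g f)) : UpdFree (actConj KU i e g) :=
  UpdFree.bigAnd (List.forall_mem_map.mpr fun f _ => h f)

end UpdFree

/-- The hope update model with the actions and action relations of `U` and the hope update formulas
`θ`. It serves to replace the hope update formulas of `U` by update-free equivalents. -/
def UpdModel.withHope (U : UpdModel n m) (θ : Fin m → Fin n → Form n) : UpdModel n m :=
  { U with ϑ := θ }

namespace Form

/-- The reduct of `[U,e]φ` obtained by pushing the update inward with the reduction axioms. The hope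
update formulas of `U` are copied unchanged, so the result is update-free only if they are. -/
noncomputable def pushUpdate : Form n → {m : ℕ} → UpdModel n m → Fin m → Form n
  | atom p, _, _, _ => atom p
  | neg φ, _, U, e => neg (φ.pushUpdate U e)
  | and φ ψ, _, U, e => and (φ.pushUpdate U e) (ψ.pushUpdate U e)
  | know i φ, _, U, e => actConj U.KU i e fun f => know i (φ.pushUpdate U f)
  | hope i φ, _, U, e =>
      fimpl (U.ϑ e i) (actConj U.KU i e fun f => know i (fimpl (U.ϑ f i) (φ.pushUpdate U f)))
  | upd _ ϑ KU hKU e' φ, _, U, e =>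
      φ.pushUpdate
        ((U.comp ⟨ϑ, KU, hKU⟩).withHope fun x i =>
          (ϑ (finProdFinEquiv.symm x).2 i).pushUpdate U (finProdFinEquiv.symm x).1)
        (finProdFinEquiv (e, e'))

/-- The translation `t` of `L_KH^priv` into `L_KH`: updates are eliminated from the inside out,
first in the hope update formulas of an update model and then, by `pushUpdate`, in its scope. -/
noncomputable def translate : Form n → Form n
  | atom p => atom p
  | neg φ => neg φ.translate
  | and φ ψ => and φ.translate ψ.translate
  | know i φ => know i φ.translate
  | hope i φ => hope i φ.translate
  | upd _ ϑ KU hKU e φ => φ.pushUpdate ⟨fun f i => (ϑ f i).translate, KU, hKU⟩ e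

theorem updFree_pushUpdate (φ : Form n) (U : UpdModel n m) (hU : ∀ f i, UpdFree (U.ϑ f i))
    (e : Fin m) : UpdFree (φ.pushUpdate U e) := by
  induction φ generalizing m with
  | atom p => exact .atom p
  | neg φ ih => exact (ih U hU e).neg
  | and φ ψ ihφ ihψ => exact (ihφ U hU e).and (ihψ U hU e)
  | know i φ ih => exact .actConj _ i e fun f => (ih U hU f).know i
  | hope i φ ih =>
    exact (hU e i).impl (.actConj _ i e fun f => ((hU f i).impl (ih U hU f)).know i)
  | upd m' ϑ KU hKU e' _ ihϑ ihφ => exact ihφ _ (fun _ _ => ihϑ _ _ U hU _) _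

theorem updFree_translate (φ : Form n) : UpdFree φ.translate := by
  induction φ with
  | atom p => exact .atom p
  | neg φ ih => exact ih.neg
  | and φ ψ ihφ ihψ => exact ihφ.and ihψ
  | know i φ ih => exact ih.know i
  | hope i φ ih => exact ih.hope i
  | upd m ϑ KU hKU e φ ihϑ _ => exact updFree_pushUpdate φ _ ihϑ e

theorem updM_provEquiv_pushUpdate (φ : Form n) (U : UpdModel n m) {θ : Fin m → Fin n → Form n}
    (hθ : ∀ f i, ProvEquiv (U.ϑ f i) (θ f i)) (e : Fin m) :
    ProvEquiv (updM U e φ) (φ.pushUpdate (U.withHope θ) e) := by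
  induction φ generalizing m with
  | atom p => exact DerivPriv.redAtom U e p
  | neg φ ih => exact .trans (DerivPriv.redNeg U e φ) (ih U hθ e).neg
  | and φ ψ ihφ ihψ =>
    exact .trans (DerivPriv.redAnd U e φ ψ) ((ihφ U hθ e).and (ihψ U hθ e))
  | know i φ ih =>
    exact .trans (DerivPriv.redKnow U e i φ) (.actConj _ i e fun f => (ih U hθ f).know i)
  | hope i φ ih =>
    exact .trans (DerivPriv.redHope U e i φ)
      ((hθ e i).impl (.actConj _ i e fun f => ((hθ f i).impl (ih U hθ f)).know i))
  | upd m' ϑ KU hKU e' φ ihϑ ihφ =>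
    exact .trans (DerivPriv.redComp U ⟨ϑ, KU, hKU⟩ e e' φ)
      (ihφ (U.comp ⟨ϑ, KU, hKU⟩) (fun _ _ => ihϑ _ _ U hθ _) _)

theorem provEquiv_translate (φ : Form n) : ProvEquiv φ φ.translate := by
  induction φ with
  | atom p => exact .refl _
  | neg φ ih => exact ih.neg
  | and φ ψ ihφ ihψ => exact ihφ.and ihψ
  | know i φ ih => exact ih.know i
  | hope i φ ih => exact ih.hope i
  | upd m ϑ KU hKU e φ ihϑ _ => exact updM_provEquiv_pushUpdate φ ⟨ϑ, KU, hKU⟩ ihϑ e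

end Form

end Translation

/-- equiexpressivity of `L_KH^priv` with `L_KH`: there is a translation
`t : L_KH^priv → L_KH` such that for every formula `φ`, `t(φ)` contains no update
modality and `φ ↔ t(φ)` is derivable in `KH^priv`. -/
theorem priv_equiexpressivity {n : ℕ} (hn : 0 < n) :
    ∃ t : Form n → Form n, ∀ φ : Form n, UpdFree (t φ) ∧ DerivPriv (fiff φ (t φ)) :=
  ⟨Form.translate, fun φ => ⟨φ.updFree_translate, φ.provEquiv_translate⟩⟩
end
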